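/- For every d ≥ 2, the function cov fails the Euclidean bound in dimension d: δ_{cov,d} · L_d(B_1^d) > 1, while cov(B_1^d) = 1 < δ_{cov,d} · L_d(B_1^d), where B_1^d is the open unit ball in ℝ^d. Equivalently, the sphere covering density δ_{cov,d} · L_d(B_1^d) of ℝ^d is strictly greater than 1 for d ≥ 2. -/

import Mathlib

open scoped Pointwise
open MeasureTheory Bornology Filter

/-- The unit cube `[0,1]^n` in `ℝ^n`. -/
def unitCube (n : ℕ) : Set (EuclideanSpace ℝ (Fin n)) :=
  {x | ∀ i, x i ∈ Set.Icc (0 : ℝ) 1}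

/-- `cov C` is the smallest number of open unit balls (centered anywhere) needed to cover `C`. -/
noncomputable def cov (d : ℕ) (C : Set (EuclideanSpace ℝ (Fin d))) : ℕ :=
  sInf {m : ℕ | ∃ X : Finset (EuclideanSpace ℝ (Fin d)),
    X.card = m ∧ C ⊆ ⋃ x ∈ X, Metric.ball x 1}

/-- `δ_{cov,d}`: the limit of `cov(2^k·[0,1]^d)/2^{kd}` (expressed as a `limsup`, which
coincides with the limit since the latter exists). -/
noncomputable def covDensity (d : ℕ) : ℝ :=
  Filter.limsup (fun k : ℕ => (cov d ((2 : ℝ) ^ k • unitCube d) : ℝ) / 2 ^ (k * d))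
    Filter.atTop

/-!
In any covering by unit balls, a definite proportion of space is covered twice. Suppose a center
`x` had all the other centers at distance almost `2` or more. For a unit vector `u`, the point
`x + u` lies in another ball, whose center must then be close to `x + 2u`. Doing this for two unit
vectors `u`, `v` at distance `1/2` yields two distinct centers at distance about `1`. So near every
point there are two centers at distance bounded away from `2`, and their balls overlap in a set
containing a ball of fixed radius. The volumes of the balls therefore add up to at least the volume
of the covered cube plus a fixed fraction of it.
-/

section Geometry

open Metric

variable {E : Type*}

lemma exists_mem_sphere_dist_eq [NormedAddCommGroup E] [NormedSpace ℝ E]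
    (hE : 1 < Module.rank ℝ E) (c : E) {r t : ℝ} (ht : 0 ≤ t) (htr : t ≤ 2 * r) :
    ∃ u ∈ sphere c r, ∃ v ∈ sphere c r, dist u v = t := by
  have hr : 0 ≤ r := by linarith
  have : Nontrivial E := rank_pos_iff_nontrivial.1 (zero_lt_one.trans hE)
  obtain ⟨w, hw⟩ := exists_norm_eq E hr
  have hadd : c + w ∈ sphere c r := by simp [hw]
  have hsub : c - w ∈ sphere c r := by simp [hw]
  have hdist : dist (c + w) (c - w) = 2 * r := by
    rw [dist_eq_norm, add_sub_sub_cancel, ← two_smul ℝ w, norm_smul, hw, Real.norm_two]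
  obtain ⟨v, hv, hvt⟩ := (isPreconnected_sphere hE c r).intermediate_value hadd hsub
    (f := dist (c + w)) (by fun_prop) ⟨by rwa [dist_self], htr.trans hdist.ge⟩
  exact ⟨c + w, hadd, v, hv, hvt⟩

lemma exists_mem_ne_dist_add_lt [SeminormedAddCommGroup E] {X : Set E} {c x u : E}
    (hX : closedBall c 2 ⊆ ⋃ y ∈ X, ball y 1) (hx : dist x c < 1) (hu : ‖u‖ = 1) :
    ∃ y ∈ X, y ≠ x ∧ dist y (x + u) < 1 ∧ dist y c < 3 := by
  have hxu : dist (x + u) x = 1 := by simp [hu]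
  have hxuc : dist (x + u) c < 2 := by linarith [dist_triangle (x + u) x c]
  obtain ⟨y, hy, hxuy⟩ := Set.mem_iUnion₂.1 (hX (mem_closedBall.2 hxuc.le))
  rw [mem_ball] at hxuy
  refine ⟨y, hy, ?_, by rwa [dist_comm], ?_⟩
  · rintro rfl
    exact hxuy.ne hxu
  · linarith [dist_triangle_left y c (x + u)]

variable [NormedAddCommGroup E] [InnerProductSpace ℝ E]

lemma norm_sub_two_smul_sq_lt {a u : E} (h : ‖a - u‖ < ‖u‖) :
    ‖a - (2 : ℝ) • u‖ ^ 2 < 4 * ‖u‖ ^ 2 - ‖a‖ ^ 2 := by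
  have parallelogram := parallelogram_law_with_norm ℝ (a - u) u
  rw [sub_add_cancel, sub_sub, ← two_smul ℝ u] at parallelogram
  nlinarith [norm_nonneg (a - u)]

lemma dist_add_two_smul_lt {x y u : E} (hu : ‖u‖ = 1) (hy : dist y (x + u) < 1)
    (hxy : 49 / 25 ≤ dist y x) : dist y (x + (2 : ℝ) • u) < 2 / 5 := by
  rw [dist_eq_norm] at hxy
  rw [dist_eq_norm, ← sub_sub] at hy ⊢
  have hsq := norm_sub_two_smul_sq_lt (hy.trans_eq hu.symm)
  rw [hu] at hsq
  have hnear : ‖y - x - (2 : ℝ) • u‖ ^ 2 < (2 / 5) ^ 2 := by nlinarith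
  exact lt_of_pow_lt_pow_left₀ 2 (by norm_num) hnear

lemma exists_ne_dist_lt_of_closedBall_subset (hE : 1 < Module.rank ℝ E) {X : Set E} {c : E}
    (hX : closedBall c 2 ⊆ ⋃ x ∈ X, ball x 1) :
    ∃ a ∈ X, ∃ b ∈ X, a ≠ b ∧ dist a b < 49 / 25 ∧ dist a c < 3 ∧ dist b c < 3 := by
  obtain ⟨x, hx, hcx⟩ := Set.mem_iUnion₂.1 (hX (mem_closedBall_self zero_le_two))
  rw [mem_ball'] at hcx
  obtain ⟨u, hu, v, hv, huv⟩ := exists_mem_sphere_dist_eq hE (0 : E) (r := 1) (t := 1 / 2)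
    (by norm_num) (by norm_num)
  rw [mem_sphere_zero_iff_norm] at hu hv
  obtain ⟨y, hy, hyx, hyu, hyc⟩ := exists_mem_ne_dist_add_lt hX hcx hu
  obtain ⟨z, hz, hzx, hzv, hzc⟩ := exists_mem_ne_dist_add_lt hX hcx hv
  obtain hyx_dist | hyx_dist := lt_or_ge (dist y x) (49 / 25)
  · exact ⟨y, hy, x, hx, hyx, hyx_dist, hyc, by linarith⟩
  obtain hzx_dist | hzx_dist := lt_or_ge (dist z x) (49 / 25)
  · exact ⟨z, hz, x, hx, hzx, hzx_dist, hzc, by linarith⟩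
  have hy_near := dist_add_two_smul_lt hu hyu hyx_dist
  have hz_near := dist_add_two_smul_lt hv hzv hzx_dist
  have huv_two : dist (x + (2 : ℝ) • u) (x + (2 : ℝ) • v) = 1 := by
    rw [dist_add_left, dist_smul₀, huv, Real.norm_two]
    norm_num
  refine ⟨y, hy, z, hz, ?_, ?_, hyc, hzc⟩
  · rintro rfl
    linarith [dist_triangle_left (x + (2 : ℝ) • u) (x + (2 : ℝ) • v) y]
  · rw [dist_comm z] at hz_near
    linarith [dist_triangle4 y (x + (2 : ℝ) • u) (x + (2 : ℝ) • v) z]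

lemma exists_ball_subset_inter_of_closedBall_subset (hE : 1 < Module.rank ℝ E) {X : Set E} {c : E}
    (hX : closedBall c 2 ⊆ ⋃ x ∈ X, ball x 1) :
    ∃ m ∈ ball c 3, ∃ a ∈ X, ∃ b ∈ X, a ≠ b ∧ ball m (1 / 50) ⊆ ball a 1 ∩ ball b 1 := by
  obtain ⟨a, ha, b, hb, hab, hdist, hac, hbc⟩ := exists_ne_dist_lt_of_closedBall_subset hE hX
  refine ⟨midpoint ℝ a b, (convex_ball c 3).midpoint_mem hac hbc, a, ha, b, hb, hab,
    Set.subset_inter (ball_subset_ball' ?_) (ball_subset_ball' ?_)⟩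
  · rw [dist_midpoint_left, Real.norm_two]
    linarith
  · rw [dist_midpoint_right, Real.norm_two]
    linarith

end Geometry

section Overlap

variable {ι α : Type*}

/-- The set of points lying in `s i` and `s j` for two distinct indices `i` and `j` of the finite
family `X`: the part of the union that the family covers more than once. -/
def overlap (X : Finset ι) (s : ι → Set α) : Set α :=
  {p | ∃ i ∈ X, ∃ j ∈ X, i ≠ j ∧ p ∈ s i ∩ s j}

lemma overlap_insert_subset [DecidableEq ι] (i : ι) (X : Finset ι) (s : ι → Set α) :
    overlap (insert i X) s ⊆ overlap X s ∪ (s i ∩ ⋃ j ∈ X, s j) := by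
  rintro p ⟨j, hj, k, hk, hjk, hpj, hpk⟩
  rcases Finset.mem_insert.1 hj with rfl | hjX <;> rcases Finset.mem_insert.1 hk with rfl | hkX
  · exact absurd rfl hjk
  · exact .inr ⟨hpj, Set.mem_biUnion hkX hpk⟩
  · exact .inr ⟨hpk, Set.mem_biUnion hjX hpj⟩
  · exact .inl ⟨j, hjX, k, hkX, hjk, hpj, hpk⟩

lemma measure_biUnion_add_measure_overlap_le [MeasurableSpace α] (μ : Measure α) (X : Finset ι)
    {s : ι → Set α} (hs : ∀ i ∈ X, MeasurableSet (s i)) :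
    μ (⋃ i ∈ X, s i) + μ (overlap X s) ≤ ∑ i ∈ X, μ (s i) := by
  classical
  induction X using Finset.induction_on with
  | empty => simp [overlap]
  | insert i X hi ih =>
    rw [Finset.forall_mem_insert] at hs
    rw [Finset.set_biUnion_insert, Finset.sum_insert hi]
    set U := ⋃ j ∈ X, s j
    have hU : MeasurableSet U := X.measurableSet_biUnion hs.2
    calc μ (s i ∪ U) + μ (overlap (insert i X) s)
        ≤ μ (s i ∪ U) + (μ (overlap X s) + μ (s i ∩ U)) := by
          gcongr
          exact (measure_mono (overlap_insert_subset i X s)).trans (measure_union_le _ _)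
      _ = μ (s i) + (μ U + μ (overlap X s)) := by
          rw [add_left_comm, measure_union_add_inter _ hU]
          ring
      _ ≤ μ (s i) + ∑ j ∈ X, μ (s j) := by
          gcongr
          exact ih hs.2

end Overlap

section Packing

open Metric

lemma totallyBounded_of_isBounded {M : Type*} [PseudoMetricSpace M] [ProperSpace M] {A : Set M}
    (hA : IsBounded A) : TotallyBounded A :=
  hA.isCompact_closure.totallyBounded.subset subset_closure

lemma exists_finset_pairwiseDisjoint_ball_subset_biUnion_closedBall {M : Type*}
    [PseudoMetricSpace M] {A : Set M} (hA : TotallyBounded A) {r : ℝ} (hr : 0 < r) :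
    ∃ T : Finset M, ↑T ⊆ A ∧ (T : Set M).PairwiseDisjoint (ball · r) ∧
      A ⊆ ⋃ t ∈ T, closedBall t (2 * r) := by
  lift r to NNReal using hr.le
  have hpack : packingNumber (2 * r) A ≠ ⊤ := by
    obtain ⟨N, -, hN, hNA⟩ := exists_finite_isCover_of_totallyBounded (NNReal.coe_pos.1 hr).ne' hA
    exact ((packingNumber_two_mul_le_externalCoveringNumber r A).trans_lt
      (hNA.externalCoveringNumber_le_encard.trans_lt hN.encard_lt_top)).ne
  have hfin : (maximalSeparatedSet (2 * r) A).Finite := by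
    rwa [← Set.encard_ne_top_iff, encard_maximalSeparatedSet hpack]
  refine ⟨hfin.toFinset, ?_, ?_, ?_⟩
  · simpa only [hfin.coe_toFinset] using maximalSeparatedSet_subset
  · rw [hfin.coe_toFinset]
    intro x hx y hy hxy
    have hsep : ((2 * r : NNReal) : ENNReal) < edist x y :=
      isSeparated_maximalSeparatedSet hx hy hxy
    rw [edist_nndist, ENNReal.coe_lt_coe, ← NNReal.coe_lt_coe, coe_nndist, NNReal.coe_mul,
      NNReal.coe_two, two_mul] at hsep
    exact ball_disjoint_ball hsep.le
  · simpa using isCover_iff_subset_iUnion_closedBall.1 (isCover_maximalSeparatedSet hpack)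

variable {E : Type*} [NormedAddCommGroup E] [MeasurableSpace E] [BorelSpace E]

lemma card_mul_measure_ball_le (μ : Measure E) [μ.IsAddHaarMeasure] {ι : Type*} {T : Finset ι}
    {m : ι → E} {r : ℝ} {S : Set E} (hdisj : (T : Set ι).PairwiseDisjoint fun t ↦ ball (m t) r)
    (hS : ∀ t ∈ T, ball (m t) r ⊆ S) : T.card * μ (ball 0 r) ≤ μ S := by
  calc T.card * μ (ball 0 r) = ∑ t ∈ T, μ (ball (m t) r) := by
        simp only [Measure.addHaar_ball_center, Finset.sum_const, nsmul_eq_mul]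
    _ = μ (⋃ t ∈ T, ball (m t) r) :=
        (measure_biUnion_finset hdisj fun _ _ ↦ measurableSet_ball).symm
    _ ≤ μ S := measure_mono (Set.iUnion₂_subset hS)

lemma measure_le_card_mul_measure_closedBall (μ : Measure E) [μ.IsAddHaarMeasure] {T : Finset E}
    {r : ℝ} {A : Set E} (hA : A ⊆ ⋃ t ∈ T, closedBall t r) :
    μ A ≤ T.card * μ (closedBall 0 r) := by
  calc μ A ≤ ∑ t ∈ T, μ (closedBall t r) := (measure_mono hA).trans (measure_biUnion_finset_le _ _)
    _ = T.card * μ (closedBall 0 r) := by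
        simp only [Measure.addHaar_closedBall_center, Finset.sum_const, nsmul_eq_mul]

/-- A maximal `8`-separated subset of `A` covers `A` by balls of radius `8`, and the disjoint balls
of radius `4` around its points each contain a doubly covered ball of radius `1 / 50 = 8 / 400`. -/
lemma ofReal_pow_mul_measure_le_measure_overlap [InnerProductSpace ℝ E] [FiniteDimensional ℝ E]
    (hE : 1 < Module.rank ℝ E) (μ : Measure E) [μ.IsAddHaarMeasure] {X : Finset E} {A : Set E}
    (hA : ∀ c ∈ A, closedBall c 2 ⊆ ⋃ x ∈ X, ball x 1) :
    ENNReal.ofReal ((1 / 400) ^ Module.finrank ℝ E) * μ A ≤ μ (overlap X (ball · 1)) := by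
  have hbdd : IsBounded A := ((isBounded_biUnion_finset X).2 fun x _ ↦ isBounded_ball).subset
    fun c hc ↦ hA c hc (mem_closedBall_self zero_le_two)
  obtain ⟨T, hTA, hTdisj, hAT⟩ := exists_finset_pairwiseDisjoint_ball_subset_biUnion_closedBall
    (totallyBounded_of_isBounded hbdd) (r := 4) (by norm_num)
  choose! m hm a ha b hb hab hsub using fun t (ht : t ∈ T) ↦
    exists_ball_subset_inter_of_closedBall_subset hE (X := X) (hA t (hTA ht))
  have hmT : ∀ t ∈ T, ball (m t) (1 / 50) ⊆ ball t 4 := fun t ht ↦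
    ball_subset_ball' (by linarith [mem_ball.1 (hm t ht)])
  have hdisj : (T : Set E).PairwiseDisjoint fun t ↦ ball (m t) (1 / 50) :=
    fun s hs t ht hst ↦ (hTdisj hs ht hst).mono (hmT s hs) (hmT t ht)
  have hoverlap : ∀ t ∈ T, ball (m t) (1 / 50) ⊆ overlap X (ball · 1) :=
    fun t ht p hp ↦ ⟨a t, ha t ht, b t, hb t ht, hab t ht, hsub t ht hp⟩
  calc ENNReal.ofReal ((1 / 400) ^ Module.finrank ℝ E) * μ A
      ≤ ENNReal.ofReal ((1 / 400) ^ Module.finrank ℝ E) * (T.card * μ (closedBall 0 (2 * 4))) := by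
        gcongr
        exact measure_le_card_mul_measure_closedBall μ hAT
    _ = T.card * μ (ball 0 (1 / 50)) := by
        rw [Measure.addHaar_closedBall μ 0 (by norm_num : (0 : ℝ) ≤ 2 * 4),
          Measure.addHaar_ball_of_pos μ 0 (by norm_num : (0 : ℝ) < 1 / 50), mul_left_comm,
          ← mul_assoc (ENNReal.ofReal _), ← ENNReal.ofReal_mul (by positivity), ← mul_pow]
        norm_num
    _ ≤ μ (overlap X (ball · 1)) := card_mul_measure_ball_le μ hdisj hoverlap

end Packing

section Cov

open Metric

variable {d : ℕ} {C : Set (EuclideanSpace ℝ (Fin d))}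

lemma cov_le_card {X : Finset (EuclideanSpace ℝ (Fin d))} (hX : C ⊆ ⋃ x ∈ X, ball x 1) :
    cov d C ≤ X.card :=
  Nat.sInf_le ⟨X, rfl, hX⟩

lemma exists_finset_card_eq_cov (hC : IsBounded C) :
    ∃ X : Finset (EuclideanSpace ℝ (Fin d)), X.card = cov d C ∧ C ⊆ ⋃ x ∈ X, ball x 1 := by
  obtain ⟨T, hT, hCT⟩ := totallyBounded_iff.1 (totallyBounded_of_isBounded hC) 1 one_pos
  exact Nat.sInf_mem (s := {m | ∃ X : Finset (EuclideanSpace ℝ (Fin d)),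
    X.card = m ∧ C ⊆ ⋃ x ∈ X, ball x 1}) ⟨_, hT.toFinset, rfl, by simpa using hCT⟩

lemma cov_eq_one {x : EuclideanSpace ℝ (Fin d)} (hC : C.Nonempty) (hCx : C ⊆ ball x 1) :
    cov d C = 1 := by
  apply le_antisymm
  · simpa using cov_le_card (X := {x}) (by simpa using hCx)
  · obtain ⟨X, hX, hCX⟩ := exists_finset_card_eq_cov (isBounded_ball.subset hCx)
    obtain ⟨y, hy, -⟩ := Set.mem_iUnion₂.1 (hCX hC.some_mem)
    exact hX ▸ Finset.card_pos.2 ⟨y, hy⟩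

lemma cov_mul_volume_ball_le (hC : IsBounded C) :
    cov d C * volume (ball (0 : EuclideanSpace ℝ (Fin d)) (1 / 4)) ≤
      volume (thickening (1 / 4) C) := by
  obtain ⟨T, hTC, hTdisj, hCT⟩ :=
    exists_finset_pairwiseDisjoint_ball_subset_biUnion_closedBall (totallyBounded_of_isBounded hC)
      (r := 1 / 4) (by norm_num)
  have hcov : cov d C ≤ T.card := cov_le_card <| hCT.trans <|
    Set.iUnion₂_mono fun t _ ↦ closedBall_subset_ball (by norm_num)
  calc cov d C * volume (ball (0 : EuclideanSpace ℝ (Fin d)) (1 / 4))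
      ≤ T.card * volume (ball (0 : EuclideanSpace ℝ (Fin d)) (1 / 4)) := by gcongr
    _ ≤ volume (thickening (1 / 4) C) := card_mul_measure_ball_le volume hTdisj
        fun t ht ↦ ball_subset_thickening (hTC ht) _

lemma volume_add_le_cov_mul_volume_ball (hd : 2 ≤ d) {A : Set (EuclideanSpace ℝ (Fin d))}
    (hC : IsBounded C) (hA : ∀ c ∈ A, closedBall c 2 ⊆ C) :
    volume C + ENNReal.ofReal ((1 / 400) ^ d) * volume A ≤
      cov d C * volume (ball (0 : EuclideanSpace ℝ (Fin d)) 1) := by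
  obtain ⟨X, hX, hCX⟩ := exists_finset_card_eq_cov hC
  have hrank : 1 < Module.rank ℝ (EuclideanSpace ℝ (Fin d)) := by
    rw [← Module.finrank_eq_rank, finrank_euclideanSpace_fin]
    exact_mod_cast hd
  have hoverlap := ofReal_pow_mul_measure_le_measure_overlap hrank volume
    fun c hc ↦ (hA c hc).trans hCX
  rw [finrank_euclideanSpace_fin] at hoverlap
  calc volume C + ENNReal.ofReal ((1 / 400) ^ d) * volume A
      ≤ volume (⋃ x ∈ X, ball x 1) + volume (overlap X (ball · 1)) := by gcongr
    _ ≤ ∑ x ∈ X, volume (ball x 1) :=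
        measure_biUnion_add_measure_overlap_le volume X fun _ _ ↦ measurableSet_ball
    _ = cov d C * volume (ball (0 : EuclideanSpace ℝ (Fin d)) 1) := by
        simp only [Measure.addHaar_ball_center, Finset.sum_const, nsmul_eq_mul, hX]

end Cov

section Cube

open Metric

variable {ι : Type*}

/-- The cube `[a, b]^ι` in `ℝ^ι`. -/
def cube (ι : Type*) (a b : ℝ) : Set (EuclideanSpace ℝ ι) :=
  {x | ∀ i, x i ∈ Set.Icc a b}

lemma smul_unitCube (d : ℕ) {r : ℝ} (hr : 0 < r) : r • unitCube d = cube (Fin d) 0 r := by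
  ext x
  simp only [Set.mem_smul_set_iff_inv_smul_mem₀ hr.ne', unitCube, cube, Set.mem_ofPred_eq,
    Set.mem_Icc, PiLp.smul_apply, smul_eq_mul, inv_mul_le_iff₀ hr, mul_one,
    mul_nonneg_iff_of_pos_left (inv_pos.2 hr)]

lemma cube_eq_preimage_Icc (a b : ℝ) :
    cube ι a b = WithLp.ofLp ⁻¹' Set.Icc (fun _ ↦ a) (fun _ ↦ b) := by
  ext x
  simp [cube, Pi.le_def, forall_and]

lemma isBounded_cube [Finite ι] (a b : ℝ) : IsBounded (cube ι a b) := by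
  have := Fintype.ofFinite ι
  rw [cube_eq_preimage_Icc]
  exact (PiLp.antilipschitzWith_ofLp 2 _).isBounded_preimage (isBounded_Icc _ _)

variable [Fintype ι]

lemma volume_cube (a b : ℝ) :
    volume (cube ι a b) = ENNReal.ofReal (b - a) ^ Fintype.card ι := by
  rw [cube_eq_preimage_Icc, (PiLp.volume_preserving_ofLp ι).measure_preimage
    measurableSet_Icc.nullMeasurableSet, Real.volume_Icc_pi]
  simp

lemma closedBall_subset_cube {a b δ : ℝ} {x : EuclideanSpace ℝ ι} (hx : x ∈ cube ι a b) :
    closedBall x δ ⊆ cube ι (a - δ) (b + δ) := by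
  intro y hy i
  have hyx : |y i - x i| ≤ δ := (PiLp.norm_apply_le (y - x) i).trans (mem_closedBall_iff_norm.1 hy)
  obtain ⟨hax, hxb⟩ := hx i
  constructor <;> linarith [abs_le.1 hyx]

lemma thickening_cube_subset (a b δ : ℝ) :
    thickening δ (cube ι a b) ⊆ cube ι (a - δ) (b + δ) := by
  rw [thickening_eq_biUnion_ball]
  exact Set.iUnion₂_subset fun x hx ↦ ball_subset_closedBall.trans (closedBall_subset_cube hx)

end Cube

section Density

open Metric

/-- Boundedness in `k` keeps the real `limsup` in `covDensity` from taking its junk value. -/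
lemma cov_smul_unitCube_div_le (d k : ℕ) :
    (cov d ((2 : ℝ) ^ k • unitCube d) : ℝ) / 2 ^ (k * d) ≤
      2 ^ d / (volume (ball (0 : EuclideanSpace ℝ (Fin d)) (1 / 4))).toReal := by
  have hball : 0 < (volume (ball (0 : EuclideanSpace ℝ (Fin d)) (1 / 4))).toReal :=
    ENNReal.toReal_pos (measure_ball_pos _ _ (by norm_num)).ne' measure_ball_lt_top.ne
  have hpow : (1 : ℝ) ≤ 2 ^ k := one_le_pow₀ one_le_two
  have hcov : cov d (cube (Fin d) 0 (2 ^ k)) *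
      volume (ball (0 : EuclideanSpace ℝ (Fin d)) (1 / 4)) ≤ ENNReal.ofReal (2 ^ k * 2) ^ d := by
    calc _ ≤ volume (thickening (1 / 4) (cube (Fin d) 0 (2 ^ k))) :=
          cov_mul_volume_ball_le (isBounded_cube _ _)
      _ ≤ volume (cube (Fin d) (0 - 1 / 4) (2 ^ k + 1 / 4)) :=
          measure_mono (thickening_cube_subset _ _ _)
      _ ≤ ENNReal.ofReal (2 ^ k * 2) ^ d := by
          rw [volume_cube, Fintype.card_fin]
          gcongr
          linarith
  have hcov_real := ENNReal.toReal_mono (by finiteness) hcov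
  rw [ENNReal.toReal_mul, ENNReal.toReal_natCast, ENNReal.toReal_pow,
    ENNReal.toReal_ofReal (by positivity), mul_pow, ← pow_mul, mul_comm (2 ^ (k * d))] at hcov_real
  rwa [smul_unitCube d (by positivity), div_le_div_iff₀ (by positivity) hball]

lemma one_add_le_cov_smul_unitCube_div_mul_volume_ball {d k : ℕ} (hd : 2 ≤ d) (hk : 3 ≤ k) :
    1 + (1 / 800 : ℝ) ^ d ≤ (cov d ((2 : ℝ) ^ k • unitCube d) : ℝ) / 2 ^ (k * d) *
      (volume (ball (0 : EuclideanSpace ℝ (Fin d)) 1)).toReal := by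
  have hpow : (8 : ℝ) ≤ 2 ^ k := by
    calc (8 : ℝ) = 2 ^ 3 := by norm_num
      _ ≤ 2 ^ k := by gcongr; norm_num
  have hinner : ∀ c ∈ cube (Fin d) 2 (2 ^ k - 2), closedBall c 2 ⊆ cube (Fin d) 0 (2 ^ k) := by
    intro c hc
    simpa using closedBall_subset_cube (δ := 2) hc
  have hcov : ENNReal.ofReal (2 ^ k) ^ d +
      ENNReal.ofReal ((1 / 400) ^ d) * ENNReal.ofReal (2 ^ k / 2) ^ d ≤
      cov d (cube (Fin d) 0 (2 ^ k)) * volume (ball (0 : EuclideanSpace ℝ (Fin d)) 1) := by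
    refine le_trans ?_ (volume_add_le_cov_mul_volume_ball hd (isBounded_cube _ _) hinner)
    rw [volume_cube, volume_cube, Fintype.card_fin, sub_zero]
    gcongr
    linarith
  have hcov_real := ENNReal.toReal_mono (by finiteness) hcov
  have h400 : (0 : ℝ) ≤ (1 / 400) ^ d := by positivity
  rw [ENNReal.toReal_add (by finiteness) (by finiteness), ENNReal.toReal_mul, ENNReal.toReal_mul,
    ENNReal.toReal_natCast, ENNReal.toReal_pow, ENNReal.toReal_pow,
    ENNReal.toReal_ofReal (by positivity), ENNReal.toReal_ofReal h400,
    ENNReal.toReal_ofReal (by positivity)] at hcov_real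
  rw [smul_unitCube d (by positivity), div_mul_eq_mul_div, le_div_iff₀ (by positivity)]
  calc (1 + (1 / 800 : ℝ) ^ d) * 2 ^ (k * d)
      = (2 ^ k) ^ d + (1 / 400) ^ d * (2 ^ k / 2) ^ d := by
        rw [pow_mul, add_mul, one_mul, ← mul_pow, ← mul_pow]
        congr 2
        ring
    _ ≤ _ := hcov_real

lemma one_add_le_covDensity_mul_volume_ball {d : ℕ} (hd : 2 ≤ d) :
    1 + (1 / 800 : ℝ) ^ d ≤
      covDensity d * (volume (ball (0 : EuclideanSpace ℝ (Fin d)) 1)).toReal := by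
  have hball : 0 < (volume (ball (0 : EuclideanSpace ℝ (Fin d)) 1)).toReal :=
    ENNReal.toReal_pos (measure_ball_pos _ _ one_pos).ne' measure_ball_lt_top.ne
  rw [← div_le_iff₀ hball]
  refine le_limsup_of_frequently_le (Eventually.frequently ?_)
    (isBoundedUnder_of ⟨_, cov_smul_unitCube_div_le d⟩)
  filter_upwards [eventually_ge_atTop 3] with k hk
  rw [div_le_iff₀ hball]
  exact one_add_le_cov_smul_unitCube_div_mul_volume_ball hd hk

end Density

/-- For `d ≥ 2`, `cov` fails the Euclidean bound in dimension `d`: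
`cov(B_1^d) = 1` while the sphere covering density `δ_{cov,d}·L_d(B_1^d)` is strictly
greater than `1`. -/
theorem cov_fails_euclidean_bound (d : ℕ) (hd : 2 ≤ d) :
    cov d (Metric.ball (0 : EuclideanSpace ℝ (Fin d)) 1) = 1 ∧
    1 < covDensity d * (volume (Metric.ball (0 : EuclideanSpace ℝ (Fin d)) 1)).toReal := by
  refine ⟨cov_eq_one ⟨0, Metric.mem_ball_self one_pos⟩ subset_rfl, ?_⟩
  exact (lt_add_of_pos_right 1 (by positivity)).trans_le (one_add_le_covDensity_mul_volume_ball hd)
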